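/- arXiv:2202.12878 — 4 statements merged into one kernel-verified Lean document; each statement's English description precedes it below -/
import Mathlib

section
/- Let F be a presheaf on 𝒱I with a minimal generating family ((W_i)_{i∈I}, q), and let (V,x) be a central element of F. Then x belongs to ⋂_{i∈I} F_i(V), where F_i is the image of Hom_{𝒱I}(−,W_i) under q, and (V,x) is a central element of each presheaf F_i. -/
set_option maxHeartbeats 1000000

namespace Paper

/-- A finite-dimensional vector space over `𝔽_p = ZMod p`: an object of the
categories `𝒱^f` and `𝒱I`. -/
structure FDVec (p : ℕ) [Fact p.Prime] : Type 1 where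
  carrier : Type
  [addCommGroup' : AddCommGroup carrier]
  [module' : Module (ZMod p) carrier]
  [finiteDimensional' : FiniteDimensional (ZMod p) carrier]

attribute [instance] FDVec.addCommGroup' FDVec.module' FDVec.finiteDimensional'

instance (p : ℕ) [Fact p.Prime] : CoeSort (FDVec p) Type := ⟨FDVec.carrier⟩

abbrev FDVec.of (p : ℕ) [Fact p.Prime] (X : Type) [AddCommGroup X] [Module (ZMod p) X]
    [FiniteDimensional (ZMod p) X] : FDVec p := ⟨X⟩

variable {p : ℕ} [Fact p.Prime]

/-- The object of `𝒱I` determined by a subspace. -/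
abbrev subFD {W : FDVec p} (U : Submodule (ZMod p) W) : FDVec p := FDVec.of p U

theorem comp_injective {A B C : Type} [AddCommGroup A] [Module (ZMod p) A]
    [AddCommGroup B] [Module (ZMod p) B] [AddCommGroup C] [Module (ZMod p) C]
    (f : A →ₗ[ZMod p] B) (g : B →ₗ[ZMod p] C)
    (hf : Function.Injective f) (hg : Function.Injective g) :
    Function.Injective (g ∘ₗ f) := fun _ _ h => hf (hg h)

theorem linearMap_id_injective (V : Type) [AddCommGroup V] [Module (ZMod p) V] :
    Function.Injective (LinearMap.id : V →ₗ[ZMod p] V) := fun _ _ h => h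

theorem equiv_toLinearMap_injective {A B : Type} [AddCommGroup A] [Module (ZMod p) A]
    [AddCommGroup B] [Module (ZMod p) B] (e : A ≃ₗ[ZMod p] B) :
    Function.Injective (e.toLinearMap : A →ₗ[ZMod p] B) := e.injective

/-- A presheaf on the category `𝒱I` of finite-dimensional `𝔽_p`-vector spaces
and injective linear maps: a contravariant functor to `Set`. -/
structure VIPresheaf (p : ℕ) [Fact p.Prime] where
  obj : FDVec p → Type
  map : ∀ {V W : FDVec p} (f : V →ₗ[ZMod p] W), Function.Injective f → obj W → obj V
  map_id : ∀ (V : FDVec p) (h : Function.Injective (LinearMap.id : V →ₗ[ZMod p] V))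
      (x : obj V), map LinearMap.id h x = x
  map_comp : ∀ {V W X : FDVec p} (f : V →ₗ[ZMod p] W) (hf : Function.Injective f)
      (g : W →ₗ[ZMod p] X) (hg : Function.Injective g)
      (hgf : Function.Injective (g ∘ₗ f)) (x : obj X),
      map (g ∘ₗ f) hgf x = map f hf (map g hg x)

/-- A groupoid whose objects are the pairs `(U, i)` with `U` a subspace of `W i`,
and whose morphisms are linear isomorphisms between such subspaces. -/
structure SubGroupoid {ι : Type} (W : ι → FDVec p) where
  mor : ∀ (i j : ι) (U : Submodule (ZMod p) (W i)) (U' : Submodule (ZMod p) (W j)),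
    Set (↥U ≃ₗ[ZMod p] ↥U')
  id_mem : ∀ i U, LinearEquiv.refl (ZMod p) ↥U ∈ mor i i U U
  comp_mem : ∀ (i j k : ι) (U : Submodule (ZMod p) (W i)) (U' : Submodule (ZMod p) (W j))
      (U'' : Submodule (ZMod p) (W k)) (α : ↥U ≃ₗ[ZMod p] ↥U')
      (β : ↥U' ≃ₗ[ZMod p] ↥U''),
      α ∈ mor i j U U' → β ∈ mor j k U' U'' → (α.trans β) ∈ mor i k U U''
  inv_mem : ∀ (i j : ι) (U : Submodule (ZMod p) (W i)) (U' : Submodule (ZMod p) (W j))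
      (α : ↥U ≃ₗ[ZMod p] ↥U'),
      α ∈ mor i j U U' → α.symm ∈ mor j i U' U

section Restriction

variable {Wi Wj : FDVec p} {U : Submodule (ZMod p) Wi} {U' : Submodule (ZMod p) Wj}

/-- The restriction of `α : U ≃ U'` to a subspace `M ≤ U`, as a map to the ambient space. -/
def restrictMap (α : ↥U ≃ₗ[ZMod p] ↥U') {M : Submodule (ZMod p) Wi}
    (hMU : M ≤ U) : ↥M →ₗ[ZMod p] Wj :=
  U'.subtype ∘ₗ (α.toLinearMap) ∘ₗ (Submodule.inclusion hMU)

theorem restrictMap_injective (α : ↥U ≃ₗ[ZMod p] ↥U')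
    {M : Submodule (ZMod p) Wi} (hMU : M ≤ U) :
    Function.Injective (restrictMap α hMU) := by
  intro a b hab
  have h1 : α (Submodule.inclusion hMU a) = α (Submodule.inclusion hMU b) := Subtype.ext hab
  have h2 := α.injective h1
  have h3 := congrArg Subtype.val h2
  exact Subtype.ext h3

/-- The image `α(M)` of a subspace `M ≤ U` under `α : U ≃ U'`. -/
def restrictImg (α : ↥U ≃ₗ[ZMod p] ↥U') {M : Submodule (ZMod p) Wi}
    (hMU : M ≤ U) : Submodule (ZMod p) Wj :=
  LinearMap.range (restrictMap α hMU)

/-- The restriction-corestriction `α_M : M ≃ α(M)` of `α : U ≃ U'` to `M ≤ U`. -/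
noncomputable def restrictEquiv (α : ↥U ≃ₗ[ZMod p] ↥U')
    {M : Submodule (ZMod p) Wi} (hMU : M ≤ U) :
    ↥M ≃ₗ[ZMod p] ↥(restrictImg α hMU) :=
  LinearEquiv.ofInjective _ (restrictMap_injective α hMU)

end Restriction

/-- The restriction property of a groupoid on subspaces. -/
def SubGroupoid.HasRestriction {ι : Type} {W : ι → FDVec p} (G : SubGroupoid W) : Prop :=
  ∀ (i j : ι) (U : Submodule (ZMod p) (W i)) (U' : Submodule (ZMod p) (W j))
    (α : ↥U ≃ₗ[ZMod p] ↥U'), α ∈ G.mor i j U U' →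
    ∀ (M : Submodule (ZMod p) (W i)) (hMU : M ≤ U),
      restrictEquiv α hMU ∈ G.mor i j M (restrictImg α hMU)

/-- An element of `⊔_{i} Hom_{𝒱I}(V, W i)`. -/
def InjHom (V : FDVec p) {ι : Type} (W : ι → FDVec p) : Type :=
  Σ i : ι, {f : V →ₗ[ZMod p] W i // Function.Injective f}

/-- The relation `∼_𝒢` on `⊔_i Hom_{𝒱I}(V, W i)`. -/
def SubGroupoid.Rel {ι : Type} {W : ι → FDVec p} (G : SubGroupoid W) (V : FDVec p)
    (x y : InjHom V W) : Prop :=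
  ∃ α ∈ G.mor x.1 y.1 (LinearMap.range x.2.1) (LinearMap.range y.2.1),
    ∀ v : V, ((α (x.2.1.rangeRestrict v) : ↥(LinearMap.range y.2.1)) : W y.1) = y.2.1 v

/-- A generating family of a presheaf `F` on `𝒱I`: a natural surjection
`q : ⊔_i Hom_{𝒱I}(−, W i) → F`. -/
structure GenFamily {ι : Type} (W : ι → FDVec p) (F : VIPresheaf p) where
  q : ∀ (V : FDVec p) (i : ι) (f : V →ₗ[ZMod p] W i), Function.Injective f → F.obj V
  natural : ∀ (T V : FDVec p) (β : T →ₗ[ZMod p] V) (hβ : Function.Injective β)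
      (i : ι) (f : V →ₗ[ZMod p] W i) (hf : Function.Injective f)
      (hfβ : Function.Injective (f ∘ₗ β)),
      q T i (f ∘ₗ β) hfβ = F.map β hβ (q V i f hf)
  surjective : ∀ (V : FDVec p) (x : F.obj V), ∃ i f hf, q V i f hf = x

/-- `φ_i = q(id_{W i})`. -/
def GenFamily.phi {ι : Type} {W : ι → FDVec p} {F : VIPresheaf p} (Q : GenFamily W F)
    (i : ι) : F.obj (W i) :=
  Q.q (W i) i LinearMap.id (linearMap_id_injective _)

/-- The morphisms of the groupoid `𝒢_{(F,q)}`: isomorphisms `α : U ≃ U'` with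
`α^* ι_{U'}^* φ_j = ι_U^* φ_i`. -/
def GenFamily.mor {ι : Type} {W : ι → FDVec p} {F : VIPresheaf p} (Q : GenFamily W F)
    (i j : ι) (U : Submodule (ZMod p) (W i)) (U' : Submodule (ZMod p) (W j)) :
    Set (↥U ≃ₗ[ZMod p] ↥U') :=
  {α | F.map (V := subFD U) (W := subFD U') α.toLinearMap (equiv_toLinearMap_injective α)
        (F.map (V := subFD U') (W := W j) U'.subtype U'.injective_subtype (Q.phi j))
      = F.map (V := subFD U) (W := W i) U.subtype U.injective_subtype (Q.phi i)}

/-- The relation `∼_{𝒢_{(F,q)}}`. -/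
def GenFamily.GRel {ι : Type} {W : ι → FDVec p} {F : VIPresheaf p} (Q : GenFamily W F)
    (V : FDVec p) (x y : InjHom V W) : Prop :=
  ∃ α ∈ Q.mor x.1 y.1 (LinearMap.range x.2.1) (LinearMap.range y.2.1),
    ∀ v : V, ((α (x.2.1.rangeRestrict v) : ↥(LinearMap.range y.2.1)) : W y.1) = y.2.1 v

/-- `x ∈ F_i(V)`, where `F_i ⊆ F` is the image of `Hom_{𝒱I}(−, W i)` under `q`. -/
def GenFamily.memComponent {ι : Type} {W : ι → FDVec p} {F : VIPresheaf p}
    (Q : GenFamily W F) (i : ι) (V : FDVec p) (x : F.obj V) : Prop :=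
  ∃ f hf, Q.q V i f hf = x

/-- Minimality of a generating family: `F_i ⊄ F_j` for `i ≠ j`. -/
def GenFamily.Minimal {ι : Type} {W : ι → FDVec p} {F : VIPresheaf p}
    (Q : GenFamily W F) : Prop :=
  ∀ i j : ι, i ≠ j →
    ¬ (∀ (V : FDVec p) (x : F.obj V), Q.memComponent i V x → Q.memComponent j V x)

/-- A class in `𝐁(V, W)`, represented canonically by its "glue" subspace
`G = {(ν m, −ω m) : m ∈ M} ⊆ V × W`.  The two conditions express the injectivity
of `ν` and of `ω` respectively. -/
structure Corr (p : ℕ) [Fact p.Prime] (V W : FDVec p) where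
  carrier : Submodule (ZMod p) (↥V × ↥W)
  inj_left : ∀ m ∈ carrier, Prod.fst m = 0 → m = 0
  inj_right : ∀ m ∈ carrier, Prod.snd m = 0 → m = 0

/-- The pushout `V ⊕_{ν,ω} W` of a class of `𝐁(V,W)`. -/
abbrev Corr.po {V W : FDVec p} (c : Corr p V W) : FDVec p :=
  FDVec.of p ((↥V × ↥W) ⧸ c.carrier)

/-- The canonical injection `ι_V : V → V ⊕_{ν,ω} W`. -/
def Corr.inl {V W : FDVec p} (c : Corr p V W) : V →ₗ[ZMod p] c.po :=
  c.carrier.mkQ ∘ₗ LinearMap.inl (ZMod p) ↥V ↥W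

/-- The canonical injection `ι_W : W → V ⊕_{ν,ω} W`. -/
def Corr.inr {V W : FDVec p} (c : Corr p V W) : W →ₗ[ZMod p] c.po :=
  c.carrier.mkQ ∘ₗ LinearMap.inr (ZMod p) ↥V ↥W

theorem Corr.inl_injective {V W : FDVec p} (c : Corr p V W) :
    Function.Injective c.inl := by
  intro a b hab
  have h : (Submodule.Quotient.mk ((a, 0) : ↥V × ↥W) : (↥V × ↥W) ⧸ c.carrier)
      = Submodule.Quotient.mk (b, 0) := hab
  have hmem : ((a, 0) : ↥V × ↥W) - (b, 0) ∈ c.carrier := by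
    rwa [Submodule.Quotient.eq] at h
  have h2 := c.inj_right _ hmem (by simp)
  have h3 := congrArg Prod.fst h2
  simpa [sub_eq_zero] using h3

theorem Corr.inr_injective {V W : FDVec p} (c : Corr p V W) :
    Function.Injective c.inr := by
  intro a b hab
  have h : (Submodule.Quotient.mk ((0, a) : ↥V × ↥W) : (↥V × ↥W) ⧸ c.carrier)
      = Submodule.Quotient.mk (0, b) := hab
  have hmem : ((0, a) : ↥V × ↥W) - (0, b) ∈ c.carrier := by
    rwa [Submodule.Quotient.eq] at h
  have h2 := c.inj_left _ hmem (by simp)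
  have h3 := congrArg Prod.snd h2
  simpa [sub_eq_zero] using h3

/-- The fibre `σ_{(V,x)}F(W)` of `σ_V F(W) = ⊔_{𝐁(V,W)} F(V ⊕_{ν,ω} W)` over `x ∈ F(V)`. -/
def CentralFib (F : VIPresheaf p) (V : FDVec p) (x : F.obj V) (W : FDVec p) : Type :=
  Σ c : Corr p V W,
    {b : F.obj c.po // F.map (V := V) (W := c.po) c.inl c.inl_injective b = x}

/-- The map `ρ_{F,(V,x)} : σ_{(V,x)}F(W) → F(W)`, sending `b` to `ι_W^* b`. -/
def centralMap (F : VIPresheaf p) (V : FDVec p) (x : F.obj V) (W : FDVec p) :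
    CentralFib F V x W → F.obj W :=
  fun s => F.map (V := W) (W := Sigma.fst s |>.po) s.1.inr s.1.inr_injective s.2.1

/-- `(V, x)` is central for `F` if `ρ_{F,(V,x)}` is an isomorphism of presheaves. -/
def VIPresheaf.IsCentral (F : VIPresheaf p) (V : FDVec p) (x : F.obj V) : Prop :=
  ∀ W : FDVec p, Function.Bijective (centralMap F V x W)

/-- The class of `𝐁(V, U)` associated with a pair of injections `δ : V → W`, `ε : U → W`:
its glue subspace is `ker(δ + ε) ⊆ V × U`. -/
def kerCorr {V U W : FDVec p} (δ : V →ₗ[ZMod p] W) (ε : U →ₗ[ZMod p] W)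
    (hδ : Function.Injective δ) (hε : Function.Injective ε) : Corr p V U where
  carrier := LinearMap.ker (δ.coprod ε)
  inj_left := by
    intro m hm h1
    have hk : δ m.1 + ε m.2 = 0 := by simpa [LinearMap.mem_ker] using hm
    rw [h1] at hk
    simp only [map_zero, zero_add] at hk
    have h2 : m.2 = 0 := hε (by simpa using hk)
    exact Prod.ext h1 h2
  inj_right := by
    intro m hm h2
    have hk : δ m.1 + ε m.2 = 0 := by simpa [LinearMap.mem_ker] using hm
    rw [h2] at hk
    simp only [map_zero, add_zero] at hk
    have h1 : m.1 = 0 := hδ (by simpa using hk)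
    exact Prod.ext h1 h2

/-- The isomorphism `ε ↑ δ : V ⊕_{ν,μ} U ≃ δ(V) + ε(U)` of the first isomorphism theorem. -/
noncomputable def upArrow {V U W : FDVec p} (δ : V →ₗ[ZMod p] W) (ε : U →ₗ[ZMod p] W) :
    ((↥V × ↥U) ⧸ LinearMap.ker (δ.coprod ε)) ≃ₗ[ZMod p]
      ↥(LinearMap.range δ ⊔ LinearMap.range ε : Submodule (ZMod p) W) :=
  (δ.coprod ε).quotKerEquivRange ≪≫ₗ LinearEquiv.ofEq _ _ (LinearMap.range_coprod δ ε)

/-- The class `[T, id_T, α] ∈ 𝐁(V, T)` associated with an injection `α : T → V`. -/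
def idCorr {V T : FDVec p} (α : T →ₗ[ZMod p] V) (hα : Function.Injective α) :
    Corr p V T where
  carrier := LinearMap.range (α.prod (-(LinearMap.id : T →ₗ[ZMod p] T)))
  inj_left := by
    rintro m ⟨t, rfl⟩ h1
    simp only [LinearMap.prod_apply, Pi.prod, LinearMap.neg_apply, LinearMap.id_apply] at h1 ⊢
    have ht : t = 0 := hα (by simpa using h1)
    simp [ht]
  inj_right := by
    rintro m ⟨t, rfl⟩ h2
    simp only [LinearMap.prod_apply, Pi.prod, LinearMap.neg_apply, LinearMap.id_apply] at h2 ⊢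
    have ht : t = 0 := by simpa [neg_eq_zero] using h2
    simp [ht]

/-- The sub-presheaf `F_i ⊆ F`: the image of `Hom_{𝒱I}(−, W i)` under `q`. -/
def GenFamily.component {ι : Type} {W : ι → FDVec p} {F : VIPresheaf p}
    (Q : GenFamily W F) (i : ι) : VIPresheaf p where
  obj V := {x : F.obj V // Q.memComponent i V x}
  map {T V} β hβ y :=
    ⟨F.map β hβ y.1, by
      obtain ⟨f, hf, hqf⟩ := y.2
      refine ⟨f ∘ₗ β, comp_injective β f hβ hf, ?_⟩
      rw [Q.natural T V β hβ i f hf (comp_injective β f hβ hf), hqf]⟩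
  map_id := by
    intro V h x
    exact Subtype.ext (F.map_id V h x.1)
  map_comp := by
    intro V W' X f hf g hg hgf x
    exact Subtype.ext (F.map_comp f hf g hg hgf x.1)

/-!
A central `x` makes every `y ∈ F(U)` the restriction of some `b` on a pushout of `V` and `U` that
also restricts to `x`, and any component `F_j` containing `b` contains both `x` and `y`. For
`y = φ_i`, minimality forces `j = i`, so `x ∈ F_i(V)`.

For centrality in `F_i`, injectivity of `ρ` is inherited from `F` along the inclusion `F_i ⊆ F`.
For surjectivity, elements `x = q(δ)` and `y = q(ε)` of `F_i`, with `δ : V → W_i` and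
`ε : U → W_i`, are both restrictions of `q(g)`, where `g` is the injection into `W_i` of the
pushout of `V` and `U` over `δ(V) ∩ ε(U)`.
-/

section Pushout

variable {V U : FDVec p} {X : Type*} [AddCommGroup X] [Module (ZMod p) X]

/-- The map `V ⊕_{ν,ω} U → X` out of the pushout induced by linear maps `δ : V → X` and
`ε : U → X`. The hypothesis says that `δ` and `ε` agree on the glued subspace; it has this form
because a `Corr` records the pairs `(ν m, −ω m)`. -/
def Corr.desc (c : Corr p V U) (δ : V →ₗ[ZMod p] X) (ε : U →ₗ[ZMod p] X)
    (h : c.carrier ≤ LinearMap.ker (δ.coprod ε)) : c.po →ₗ[ZMod p] X :=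
  c.carrier.liftQ (δ.coprod ε) h

variable (c : Corr p V U) (δ : V →ₗ[ZMod p] X) (ε : U →ₗ[ZMod p] X)

theorem Corr.desc_comp_inl (h : c.carrier ≤ LinearMap.ker (δ.coprod ε)) :
    c.desc δ ε h ∘ₗ c.inl = δ := by
  rw [Corr.desc, Corr.inl, ← LinearMap.comp_assoc, Submodule.liftQ_mkQ, LinearMap.coprod_inl]

theorem Corr.desc_comp_inr (h : c.carrier ≤ LinearMap.ker (δ.coprod ε)) :
    c.desc δ ε h ∘ₗ c.inr = ε := by
  rw [Corr.desc, Corr.inr, ← LinearMap.comp_assoc, Submodule.liftQ_mkQ, LinearMap.coprod_inr]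

theorem Corr.desc_injective (h : c.carrier = LinearMap.ker (δ.coprod ε)) :
    Function.Injective (c.desc δ ε h.le) :=
  LinearMap.ker_eq_bot.mp (Submodule.ker_liftQ_eq_bot _ _ _ h.ge)

end Pushout

section Hom

/-- A natural transformation between presheaves on `𝒱I`. -/
structure VIPresheaf.Hom (G F : VIPresheaf p) where
  app : ∀ U : FDVec p, G.obj U → F.obj U
  naturality : ∀ {T U : FDVec p} (β : T →ₗ[ZMod p] U) (hβ : Function.Injective β)
    (y : G.obj U), app T (G.map β hβ y) = F.map β hβ (app U y)

variable {G F : VIPresheaf p} (η : G.Hom F) {V : FDVec p} {x : G.obj V} {U : FDVec p}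

/-- The map `σ_{(V,x)}G(U) → σ_{(V,η x)}F(U)` induced by a natural transformation `η : G → F`. -/
def CentralFib.map : CentralFib G V x U → CentralFib F V (η.app V x) U :=
  Sigma.map id fun c => Subtype.map (η.app c.po) fun b hb =>
    (η.naturality c.inl c.inl_injective b).symm.trans (congrArg (η.app V) hb)

theorem CentralFib.map_injective (hη : ∀ U, Function.Injective (η.app U)) :
    Function.Injective (CentralFib.map η : CentralFib G V x U → _) :=
  Function.injective_id.sigma_map fun c => Subtype.map_injective _ (hη c.po)

theorem centralMap_map (s : CentralFib G V x U) :
    centralMap F V (η.app V x) U (s.map η) = η.app U (centralMap G V x U s) :=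
  (η.naturality _ _ _).symm

theorem centralMap_injective_of_hom (hη : ∀ U, Function.Injective (η.app U))
    (hx : Function.Injective (centralMap F V (η.app V x) U)) :
    Function.Injective (centralMap G V x U) := by
  intro s t hst
  apply CentralFib.map_injective η hη
  apply hx
  rw [centralMap_map, centralMap_map, hst]

end Hom

namespace GenFamily

variable {ι : Type} {W : ι → FDVec p} {F : VIPresheaf p} {Q : GenFamily W F} {i j : ι}
  {V U : FDVec p} {x : F.obj V} {y : F.obj U}

theorem map_q_of_comp_eq (Q : GenFamily W F) {β : U →ₗ[ZMod p] V} (hβ : Function.Injective β)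
    {f : V →ₗ[ZMod p] W i} (hf : Function.Injective f) {g : U →ₗ[ZMod p] W i}
    (hg : Function.Injective g) (h : f ∘ₗ β = g) :
    F.map β hβ (Q.q V i f hf) = Q.q U i g hg := by
  subst h
  exact (Q.natural U V β hβ i f hf hg).symm

theorem map_phi (Q : GenFamily W F) {f : V →ₗ[ZMod p] W i} (hf : Function.Injective f) :
    F.map f hf (Q.phi i) = Q.q V i f hf :=
  Q.map_q_of_comp_eq hf (linearMap_id_injective _) hf f.id_comp

theorem memComponent.map (hx : Q.memComponent i V x) (β : U →ₗ[ZMod p] V)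
    (hβ : Function.Injective β) : Q.memComponent i U (F.map β hβ x) :=
  ((Q.component i).map β hβ ⟨x, hx⟩).2

theorem memComponent.of_phi (h : Q.memComponent j (W i) (Q.phi i))
    (hx : Q.memComponent i V x) : Q.memComponent j V x := by
  obtain ⟨f, hf, rfl⟩ := hx
  rw [← Q.map_phi hf]
  exact h.map f hf

theorem Minimal.eq_of_memComponent_phi (hmin : Q.Minimal)
    (h : Q.memComponent j (W i) (Q.phi i)) : i = j := by
  by_contra hij
  exact hmin i j hij fun _ _ => h.of_phi

theorem exists_memComponent_and_memComponent (Q : GenFamily W F)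
    (hx : Function.Surjective (centralMap F V x U)) (y : F.obj U) :
    ∃ j, Q.memComponent j V x ∧ Q.memComponent j U y := by
  obtain ⟨⟨c, b, rfl⟩, rfl⟩ := hx y
  obtain ⟨j, hb⟩ : ∃ j, Q.memComponent j c.po b := Q.surjective c.po b
  exact ⟨j, hb.map c.inl c.inl_injective, hb.map c.inr c.inr_injective⟩

theorem Minimal.memComponent_of_centralMap_surjective (hmin : Q.Minimal)
    (hx : Function.Surjective (centralMap F V x (W i))) : Q.memComponent i V x := by
  obtain ⟨j, hxj, hφj⟩ := Q.exists_memComponent_and_memComponent hx (Q.phi i)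
  rwa [hmin.eq_of_memComponent_phi hφj]

theorem memComponent.exists_amalgam (hx : Q.memComponent i V x) (hy : Q.memComponent i U y) :
    ∃ (c : Corr p V U) (b : F.obj c.po), Q.memComponent i c.po b ∧
      F.map c.inl c.inl_injective b = x ∧ F.map c.inr c.inr_injective b = y := by
  obtain ⟨δ, hδ, rfl⟩ := hx
  obtain ⟨ε, hε, rfl⟩ := hy
  let c := kerCorr δ ε hδ hε
  have hg : Function.Injective (c.desc δ ε le_rfl) := c.desc_injective δ ε rfl
  exact ⟨c, Q.q c.po i _ hg, ⟨_, hg, rfl⟩,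
    Q.map_q_of_comp_eq _ hg hδ (c.desc_comp_inl δ ε le_rfl),
    Q.map_q_of_comp_eq _ hg hε (c.desc_comp_inr δ ε le_rfl)⟩

theorem centralMap_component_surjective (h : Q.memComponent i V x) :
    Function.Surjective (centralMap (Q.component i) V ⟨x, h⟩ U) := by
  rintro ⟨y, hy⟩
  obtain ⟨c, b, hb, hbx, hby⟩ := h.exists_amalgam hy
  exact ⟨⟨c, ⟨b, hb⟩, Subtype.ext hbx⟩, Subtype.ext hby⟩

/-- The inclusion `F_i → F`. -/
def componentInclusion (Q : GenFamily W F) (i : ι) : (Q.component i).Hom F where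
  app _ := Subtype.val
  naturality _ _ _ := rfl

theorem centralMap_component_injective (h : Q.memComponent i V x)
    (hx : Function.Injective (centralMap F V x U)) :
    Function.Injective (centralMap (Q.component i) V ⟨x, h⟩ U) :=
  centralMap_injective_of_hom (Q.componentInclusion i) (fun _ => Subtype.val_injective) hx

end GenFamily

/-- **Statement 13.** Let `F` have a minimal generating family `((W_i), q)` and let `(V,x)`
be a central element of `F`.  Then `x ∈ ⋂_i F_i(V)` and `(V,x)` is central for each
sub-presheaf `F_i`. -/
theorem statement_13 {p : ℕ} [Fact p.Prime] {ι : Type} (W : ι → FDVec p)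
    (F : VIPresheaf p) (Q : GenFamily W F) (hmin : Q.Minimal)
    (V : FDVec p) (x : F.obj V) (hx : F.IsCentral V x) (i : ι) :
    ∃ h : Q.memComponent i V x, (Q.component i).IsCentral V ⟨x, h⟩ := by
  have h : Q.memComponent i V x :=
    hmin.memComponent_of_centralMap_surjective (hx (W i)).surjective
  exact ⟨h, fun U => ⟨GenFamily.centralMap_component_injective h (hx U).injective,
    GenFamily.centralMap_component_surjective h⟩⟩

end Paper
end

section
/- Let (F, q_F) be an object of _{(W_i)}Set^{(𝒱I)ᵒᵖ} and let (V,x) be a central element of F; for each i ∈ I let δ_i : V → W_i be an injective linear map with x = δ_i^*φ_i. Then for all injective linear maps ε_k : U → W_k and ε_j : U → W_j such that ε_k^*φ_k = ε_j^*φ_j, one has (ε_k↑δ_k)^* ι_{δ_k(V)+ε_k(U)}^* φ_k = (ε_j↑δ_j)^* ι_{δ_j(V)+ε_j(U)}^* φ_j. -/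
set_option maxHeartbeats 1000000

namespace Paper

variable {p : ℕ} [Fact p.Prime]

/-! For injections `δ : V → W`, `ε : U → W` and `y ∈ F(W)`, the map
`V ⊕_{ν,μ} U ≃ δ(V) + ε(U) ↪ W` restricts to `δ` along `ι_V` and to `ε` along `ι_U`. Hence the
pullback of `y` to the pushout lies in the fibre of `σ_V F(U)` over `δ^* y`, and `ρ` sends it to
`ε^* y`. Two such pullbacks over the same `x` and with the same image under `ρ` are equal as soon
as `ρ` is injective. -/

section UpArrow

variable {V U W : FDVec p} {δ : V →ₗ[ZMod p] W} {ε : U →ₗ[ZMod p] W}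
  (hδ : Function.Injective δ) (hε : Function.Injective ε)

theorem subtype_comp_upArrow_comp_inl :
    (LinearMap.range δ ⊔ LinearMap.range ε).subtype ∘ₗ (upArrow δ ε).toLinearMap ∘ₗ
      (kerCorr δ ε hδ hε).inl = δ :=
  LinearMap.coprod_inl δ ε

theorem subtype_comp_upArrow_comp_inr :
    (LinearMap.range δ ⊔ LinearMap.range ε).subtype ∘ₗ (upArrow δ ε).toLinearMap ∘ₗ
      (kerCorr δ ε hδ hε).inr = ε :=
  LinearMap.coprod_inr δ ε

end UpArrow

namespace VIPresheaf

theorem map_map_map_of_comp_eq (F : VIPresheaf p) {A B C D : FDVec p}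
    {f : A →ₗ[ZMod p] B} (hf : Function.Injective f)
    {g : B →ₗ[ZMod p] C} (hg : Function.Injective g)
    {h : C →ₗ[ZMod p] D} (hh : Function.Injective h)
    {l : A →ₗ[ZMod p] D} (hl : Function.Injective l)
    (comp_eq : h ∘ₗ g ∘ₗ f = l) (y : F.obj D) :
    F.map f hf (F.map g hg (F.map h hh y)) = F.map l hl y := by
  subst comp_eq
  rw [F.map_comp (g ∘ₗ f) (comp_injective f g hf hg) h hh, F.map_comp f hf g hg]

variable (F : VIPresheaf p) {V U W : FDVec p} {δ : V →ₗ[ZMod p] W} {ε : U →ₗ[ZMod p] W}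
  (hδ : Function.Injective δ) (hε : Function.Injective ε)

/-- The element `(ε ↑ δ)^* ι_{δ(V)+ε(U)}^* y` of `F(V ⊕_{ν,μ} U)`. The maps `δ` and `ε` are
implicit, being determined by their injectivity proofs. -/
noncomputable def upPullback (y : F.obj W) : F.obj (kerCorr δ ε hδ hε).po :=
  F.map (upArrow δ ε).toLinearMap (equiv_toLinearMap_injective _)
    (F.map (V := subFD (LinearMap.range δ ⊔ LinearMap.range ε)) (W := W)
      (LinearMap.range δ ⊔ LinearMap.range ε).subtype (Submodule.injective_subtype _) y)

theorem map_inl_upPullback (y : F.obj W) :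
    F.map (kerCorr δ ε hδ hε).inl (kerCorr δ ε hδ hε).inl_injective (F.upPullback hδ hε y) =
      F.map δ hδ y :=
  F.map_map_map_of_comp_eq _ _ _ hδ (subtype_comp_upArrow_comp_inl hδ hε) y

theorem map_inr_upPullback (y : F.obj W) :
    F.map (kerCorr δ ε hδ hε).inr (kerCorr δ ε hδ hε).inr_injective (F.upPullback hδ hε y) =
      F.map ε hε y :=
  F.map_map_map_of_comp_eq _ _ _ hε (subtype_comp_upArrow_comp_inr hδ hε) y

end VIPresheaf

namespace CentralFib

variable {F : VIPresheaf p} {V U W : FDVec p} {x : F.obj V} {y : F.obj W}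
  {δ : V →ₗ[ZMod p] W} {ε : U →ₗ[ZMod p] W}
  (hδ : Function.Injective δ) (hε : Function.Injective ε) (hy : F.map δ hδ y = x)

/-- The element `(ε ↑ δ)^* ι_{δ(V)+ε(U)}^* y` in the fibre of `σ_V F(U)` over `x = δ^* y`. -/
noncomputable def ofUpPullback : CentralFib F V x U :=
  ⟨kerCorr δ ε hδ hε, F.upPullback hδ hε y, (F.map_inl_upPullback hδ hε y).trans hy⟩

theorem centralMap_ofUpPullback :
    centralMap F V x U (ofUpPullback hδ hε hy) = F.map ε hε y :=
  F.map_inr_upPullback hδ hε y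

end CentralFib

theorem statement_14_general {F : VIPresheaf p} {V U W W' : FDVec p} {x : F.obj V}
    (hx : Function.Injective (centralMap F V x U))
    {y : F.obj W} {δ : V →ₗ[ZMod p] W} (hδ : Function.Injective δ) (hy : F.map δ hδ y = x)
    {y' : F.obj W'} {δ' : V →ₗ[ZMod p] W'} (hδ' : Function.Injective δ')
    (hy' : F.map δ' hδ' y' = x)
    {ε : U →ₗ[ZMod p] W} (hε : Function.Injective ε)
    {ε' : U →ₗ[ZMod p] W'} (hε' : Function.Injective ε')
    (hyy' : F.map ε hε y = F.map ε' hε' y') :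
    (⟨kerCorr δ ε hδ hε, F.upPullback hδ hε y⟩ : Σ c : Corr p V U, F.obj c.po) =
      ⟨kerCorr δ' ε' hδ' hε', F.upPullback hδ' hε' y'⟩ := by
  have same_image : centralMap F V x U (.ofUpPullback hδ hε hy) =
      centralMap F V x U (.ofUpPullback hδ' hε' hy') := by
    simpa only [CentralFib.centralMap_ofUpPullback] using hyy'
  exact congrArg (Sigma.map id fun _ => Subtype.val) (hx same_image)

/-- **Statement 14.** Let `(F, q_F)` be an object of `_{(W_i)}Set^{(𝒱I)ᵒᵖ}`, let `(V,x)` be a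
central element of `F`, and for each `i` let `δ_i : V → W_i` be injective with
`x = δ_i^* φ_i`.  Then for all injective `ε_k : U → W_k`, `ε_j : U → W_j` with
`ε_k^* φ_k = ε_j^* φ_j`, one has
`(ε_k ↑ δ_k)^* ι_{δ_k(V)+ε_k(U)}^* φ_k = (ε_j ↑ δ_j)^* ι_{δ_j(V)+ε_j(U)}^* φ_j`
(as elements of `σ_V F(U)`, i.e. equality of the classes together with the elements). -/
theorem statement_14 {p : ℕ} [Fact p.Prime] {ι : Type} (W : ι → FDVec p)
    (F : VIPresheaf p) (Q : GenFamily W F)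
    (V : FDVec p) (x : F.obj V) (hx : F.IsCentral V x)
    (δ : ∀ i, V →ₗ[ZMod p] W i) (hδ : ∀ i, Function.Injective (δ i))
    (hxδ : ∀ i, x = F.map (δ i) (hδ i) (Q.phi i))
    (U : FDVec p) (k j : ι)
    (εk : U →ₗ[ZMod p] W k) (hεk : Function.Injective εk)
    (εj : U →ₗ[ZMod p] W j) (hεj : Function.Injective εj)
    (hφ : F.map εk hεk (Q.phi k) = F.map εj hεj (Q.phi j))
    (bk : F.obj (kerCorr (δ k) εk (hδ k) hεk).po)
    (hbk : bk = F.map (upArrow (δ k) εk).toLinearMap (equiv_toLinearMap_injective _)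
        (F.map (V := subFD (LinearMap.range (δ k) ⊔ LinearMap.range εk)) (W := W k)
          (LinearMap.range (δ k) ⊔ LinearMap.range εk).subtype
          (Submodule.injective_subtype _) (Q.phi k)))
    (bj : F.obj (kerCorr (δ j) εj (hδ j) hεj).po)
    (hbj : bj = F.map (upArrow (δ j) εj).toLinearMap (equiv_toLinearMap_injective _)
        (F.map (V := subFD (LinearMap.range (δ j) ⊔ LinearMap.range εj)) (W := W j)
          (LinearMap.range (δ j) ⊔ LinearMap.range εj).subtype
          (Submodule.injective_subtype _) (Q.phi j))) :
    (⟨kerCorr (δ k) εk (hδ k) hεk, bk⟩ : Σ c : Corr p V U, F.obj c.po)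
      = ⟨kerCorr (δ j) εj (hδ j) hεj, bj⟩ := by
  subst hbk hbj
  exact statement_14_general (hx U).injective (hδ k) (hxδ k).symm (hδ j) (hxδ j).symm hεk hεj hφ

end Paper
end

section
/- Let F be a presheaf on 𝒱I with a minimal generating family ((W_i)_{i∈I}, q), let x ∈ F(V), and let (δ_i : V → W_i)_{i∈I} be a family of injective linear maps such that x = δ_i^*φ_i for all i ∈ I; write V_i := δ_i(V). Then (V,x) is central for F if and only if the following two conditions hold: (1) for every α ∈ 𝒢_{(F,q)}(U ⊆ W_i, U' ⊆ W_j) and every v ∈ U ∩ V_i, α(v) = δ_j((δ_i|^{V_i})^{-1}(v)); (2) for all subspaces U ⊆ W_i and U' ⊆ W_j and every linear isomorphism α : U → U' satisfying α(v) = δ_j((δ_i|^{V_i})^{-1}(v)) for all v ∈ U ∩ V_i, one has α ∈ 𝒢_{(F,q)}(U ⊆ W_i, U' ⊆ W_j) if and only if ᾱ ∈ 𝒢_{(F,q)}(U+V_i ⊆ W_i, U'+V_j ⊆ W_j), where ᾱ : U+V_i → U'+V_j is the linear map sending u ∈ U to α(u) and v ∈ V_i to δ_j((δ_i|^{V_i})^{-1}(v)).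 -/
set_option maxHeartbeats 1000000

namespace Paper

variable {p : ℕ} [Fact p.Prime]

/-!
Every element of `F(T)` has the form `q_i(f)` for an injection `f : T → W_i`, and an isomorphism
`α : U ≃ U'` lies in `𝒢_{(F,q)}` exactly when `q_i(f) = q_j(α ∘ f)` for one (equivalently, every)
parametrization `f` of `U`. So both conditions can be read on representatives: (1) says that
`q_i(f) = q_j(g)` forces `f` and `g` to meet the images of `δ_i` and `δ_j` at the same points, and
(2) says that for injections `f`, `g` of a pushout `V ⊕ U` which restrict to `δ_i`, `δ_j` on `V`,
the equality `q_i(f) = q_j(g)` can be tested on `U`.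

The map `ρ` is always surjective, since `q_i(ε)` is the restriction of the element represented by
the injection into `W_i` of the pushout determined by `δ_i` and `ε`. Two elements of a fibre of `ρ`
lie over the same class of `𝐁(V, U)` by (1), and are then equal by (2); conversely, comparing such
elements when `ρ` is injective yields (1) from their classes and (2) from their values.
-/

theorem exists_linearEquiv_coe_eq {R M N : Type*} [Semiring R] [AddCommMonoid M]
    [AddCommMonoid N] [Module R M] [Module R N] {f : M →ₗ[R] N} (hf : Function.Injective f)
    {U : Submodule R N} (hU : LinearMap.range f = U) :
    ∃ e : M ≃ₗ[R] U, ∀ m, (e m : N) = f m := by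
  subst hU
  exact ⟨LinearEquiv.ofInjective f hf, fun _ => rfl⟩

theorem VIPresheaf.map_linearEquiv_injective (F : VIPresheaf p) {V W : FDVec p}
    (e : V ≃ₗ[ZMod p] W) :
    Function.Injective (F.map e.toLinearMap (equiv_toLinearMap_injective e)) := by
  refine Function.LeftInverse.injective
    (g := F.map e.symm.toLinearMap (equiv_toLinearMap_injective e.symm)) fun x => ?_
  rw [← F.map_comp _ _ _ _ (e.injective.comp e.symm.injective)]
  simp only [LinearEquiv.comp_symm, F.map_id]

namespace Corr

variable {V U : FDVec p} (c : Corr p V U)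

theorem neg_mem_carrier_iff (v : V) (u : U) : (v, -u) ∈ c.carrier ↔ c.inr u = c.inl v := by
  have hsub : ((v, 0) : ↥V × ↥U) - (0, u) = (v, -u) := by simp
  rw [← hsub, ← Submodule.Quotient.eq, eq_comm]
  rfl

variable {c} in
theorem eq_of_inr_eq_inl_iff {d : Corr p V U}
    (h : ∀ v u, c.inr u = c.inl v ↔ d.inr u = d.inl v) : c = d := by
  have hcarrier : c.carrier = d.carrier := by
    ext ⟨v, u⟩
    rw [← neg_neg u, neg_mem_carrier_iff, neg_mem_carrier_iff, h]
  cases c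
  cases d
  cases hcarrier
  rfl

section Module

variable {A : Type*} [AddCommGroup A] [Module (ZMod p) A]

theorem range_comp_inr_sup_range_comp_inl (f : c.po →ₗ[ZMod p] A) :
    LinearMap.range (f ∘ₗ c.inr) ⊔ LinearMap.range (f ∘ₗ c.inl) = LinearMap.range f := by
  have hcoprod : (f ∘ₗ c.inl).coprod (f ∘ₗ c.inr) = f ∘ₗ c.carrier.mkQ := by
    apply LinearMap.prod_ext <;> ext <;> simp [inl, inr]
  rw [sup_comm, ← LinearMap.range_coprod, hcoprod,
    LinearMap.range_comp_of_range_eq_top _ (Submodule.range_mkQ _)]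

theorem exists_injective_comp_eq {δ : V →ₗ[ZMod p] A} {ε : U →ₗ[ZMod p] A}
    (hδ : Function.Injective δ) (hε : Function.Injective ε) :
    ∃ (c : Corr p V U) (f : c.po →ₗ[ZMod p] A),
      Function.Injective f ∧ f ∘ₗ c.inl = δ ∧ f ∘ₗ c.inr = ε := by
  refine ⟨⟨LinearMap.ker (δ.coprod ε), ?_, ?_⟩,
    (LinearMap.ker (δ.coprod ε)).liftQ (δ.coprod ε) le_rfl,
    LinearMap.ker_eq_bot.mp (Submodule.ker_liftQ_eq_bot _ _ _ le_rfl), ?_, ?_⟩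
  · rintro ⟨v, u⟩ hvu rfl
    simpa [map_eq_zero_iff ε hε] using hvu
  · rintro ⟨v, u⟩ hvu rfl
    simpa [map_eq_zero_iff δ hδ] using hvu
  · ext v
    simp [inl]
  · ext u
    simp [inr]

end Module

end Corr

namespace GenFamily

variable {ι : Type} {W : ι → FDVec p} {F : VIPresheaf p} (Q : GenFamily W F)

section Representatives

variable {S T : FDVec p} {i j : ι}

variable {Q} in
theorem q_comp_eq_q_comp {f : T →ₗ[ZMod p] W i} {hf : Function.Injective f}
    {g : T →ₗ[ZMod p] W j} {hg : Function.Injective g} (h : Q.q T i f hf = Q.q T j g hg)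
    {β : S →ₗ[ZMod p] T} (hβ : Function.Injective β) :
    Q.q S i (f ∘ₗ β) (hf.comp hβ) = Q.q S j (g ∘ₗ β) (hg.comp hβ) := by
  rw [Q.natural S T β hβ i f hf, Q.natural S T β hβ j g hg, h]

theorem q_comp_linearEquiv_eq_iff {f : T →ₗ[ZMod p] W i} (hf : Function.Injective f)
    {g : T →ₗ[ZMod p] W j} (hg : Function.Injective g) (e : S ≃ₗ[ZMod p] T) :
    Q.q S i (f ∘ₗ e.toLinearMap) (hf.comp e.injective)
      = Q.q S j (g ∘ₗ e.toLinearMap) (hg.comp e.injective) ↔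
    Q.q T i f hf = Q.q T j g hg := by
  rw [Q.natural S T _ e.injective, Q.natural S T _ e.injective]
  exact (F.map_linearEquiv_injective e).eq_iff

theorem q_eq_map_phi {f : T →ₗ[ZMod p] W i} (hf : Function.Injective f) :
    Q.q T i f hf = F.map f hf (Q.phi i) :=
  Q.natural T (W i) f hf i LinearMap.id (linearMap_id_injective _) hf

variable {U : Submodule (ZMod p) (W i)} {U' : Submodule (ZMod p) (W j)}

theorem mem_mor_iff_q_eq (α : ↥U ≃ₗ[ZMod p] ↥U') :
    α ∈ Q.mor i j U U' ↔
      Q.q (subFD U) i U.subtype U.injective_subtype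
        = Q.q (subFD U) j (U'.subtype ∘ₗ α.toLinearMap)
          (U'.injective_subtype.comp α.injective) := by
  rw [Q.natural (subFD U) (subFD U') _ α.injective _ U'.subtype U'.injective_subtype,
    Q.q_eq_map_phi (T := subFD U), Q.q_eq_map_phi (T := subFD U'), eq_comm]
  rfl

theorem mem_mor_iff_of_linearEquiv (α : ↥U ≃ₗ[ZMod p] ↥U') (e : T ≃ₗ[ZMod p] ↥U)
    {f : T →ₗ[ZMod p] W i} (hf : Function.Injective f)
    {g : T →ₗ[ZMod p] W j} (hg : Function.Injective g)
    (hef : ∀ t, (e t : W i) = f t) (heg : ∀ t, (α (e t) : W j) = g t) :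
    α ∈ Q.mor i j U U' ↔ Q.q T i f hf = Q.q T j g hg := by
  obtain rfl : U.subtype ∘ₗ e.toLinearMap = f := LinearMap.ext hef
  obtain rfl : (U'.subtype ∘ₗ α.toLinearMap) ∘ₗ e.toLinearMap = g := LinearMap.ext heg
  rw [mem_mor_iff_q_eq]
  exact (Q.q_comp_linearEquiv_eq_iff (T := subFD U) U.injective_subtype
    (U'.injective_subtype.comp α.injective) e).symm

theorem exists_linearEquiv_mem_mor_iff
    {f : T →ₗ[ZMod p] W i} (hf : Function.Injective f)
    {g : T →ₗ[ZMod p] W j} (hg : Function.Injective g)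
    (hU : LinearMap.range f = U) (hU' : LinearMap.range g = U') :
    ∃ α : ↥U ≃ₗ[ZMod p] ↥U', (∀ (u : U) (t : T), (u : W i) = f t → (α u : W j) = g t) ∧
      (α ∈ Q.mor i j U U' ↔ Q.q T i f hf = Q.q T j g hg) := by
  obtain ⟨e, he⟩ := exists_linearEquiv_coe_eq hf hU
  obtain ⟨e', he'⟩ := exists_linearEquiv_coe_eq hg hU'
  have happly : ∀ t, ((e.symm ≪≫ₗ e') (e t) : W j) = g t := by simpa using he'
  refine ⟨e.symm ≪≫ₗ e', fun u t hut => ?_,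
    Q.mem_mor_iff_of_linearEquiv _ e hf hg he happly⟩
  obtain rfl : u = e t := Subtype.ext (hut.trans (he t).symm)
  exact happly t

end Representatives

section Conditions

variable {V : FDVec p} (δ : ∀ i, V →ₗ[ZMod p] W i)

/-- Condition (1) of the centrality criterion: the morphisms of `𝒢_{(F,q)}` carry `δ_i(v)` to
`δ_j(v)` wherever they are defined. -/
def FixesImages : Prop :=
  ∀ (i j : ι) (U : Submodule (ZMod p) (W i)) (U' : Submodule (ZMod p) (W j))
    (α : ↥U ≃ₗ[ZMod p] ↥U'), α ∈ Q.mor i j U U' →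
    ∀ (w : ↥V) (hw : δ i w ∈ U), ((α ⟨δ i w, hw⟩ : ↥U') : ↥(W j)) = δ j w

/-- Condition (2) of the centrality criterion: an isomorphism `α` compatible with the `δ_i` lies
in `𝒢_{(F,q)}` if and only if its extension `ᾱ` to `U + δ_i(V)` does. Instead of constructing `ᾱ`,
we quantify over the isomorphisms `β` with its two defining properties. -/
def ExtendsAlong : Prop :=
  ∀ (i j : ι) (U : Submodule (ZMod p) (W i)) (U' : Submodule (ZMod p) (W j))
    (α : ↥U ≃ₗ[ZMod p] ↥U'),
    (∀ (w : ↥V) (hw : δ i w ∈ U), ((α ⟨δ i w, hw⟩ : ↥U') : ↥(W j)) = δ j w) →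
    ∀ (β : ↥(U ⊔ LinearMap.range (δ i)) ≃ₗ[ZMod p] ↥(U' ⊔ LinearMap.range (δ j))),
      (∀ (z : ↥(U ⊔ LinearMap.range (δ i))) (u : ↥U), (z : ↥(W i)) = u →
        ((β z : ↥(U' ⊔ LinearMap.range (δ j))) : ↥(W j)) = ((α u : ↥U') : ↥(W j))) →
      (∀ (z : ↥(U ⊔ LinearMap.range (δ i))) (w : ↥V), (z : ↥(W i)) = δ i w →
        ((β z : ↥(U' ⊔ LinearMap.range (δ j))) : ↥(W j)) = δ j w) →
      (α ∈ Q.mor i j U U' ↔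
        β ∈ Q.mor i j (U ⊔ LinearMap.range (δ i)) (U' ⊔ LinearMap.range (δ j)))

theorem fixesImages_iff_forall_q_eq :
    Q.FixesImages δ ↔
      ∀ (T : FDVec p) (i j : ι) (f : T →ₗ[ZMod p] W i) (hf : Function.Injective f)
        (g : T →ₗ[ZMod p] W j) (hg : Function.Injective g), Q.q T i f hf = Q.q T j g hg →
        ∀ t v, f t = δ i v → g t = δ j v := by
  constructor
  · intro h T i j f hf g hg hfg t v htv
    obtain ⟨α, hα, hmem⟩ := Q.exists_linearEquiv_mem_mor_iff hf hg rfl rfl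
    exact (hα _ t htv.symm).symm.trans (h i j _ _ α (hmem.2 hfg) v ⟨t, htv⟩)
  · intro h i j U U' α hα v hv
    exact h (subFD U) i j U.subtype U.injective_subtype _ _ ((Q.mem_mor_iff_q_eq α).1 hα)
      ⟨δ i v, hv⟩ v rfl

variable {Q δ}

theorem ExtendsAlong.q_eq (h : Q.ExtendsAlong δ) {U : FDVec p} {c : Corr p V U} {i j : ι}
    {f : c.po →ₗ[ZMod p] W i} (hf : Function.Injective f)
    {g : c.po →ₗ[ZMod p] W j} (hg : Function.Injective g)
    (hfδ : f ∘ₗ c.inl = δ i) (hgδ : g ∘ₗ c.inl = δ j)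
    (hfg : Q.q U i (f ∘ₗ c.inr) (hf.comp c.inr_injective)
      = Q.q U j (g ∘ₗ c.inr) (hg.comp c.inr_injective)) :
    Q.q c.po i f hf = Q.q c.po j g hg := by
  obtain ⟨α, hα, hαmem⟩ := Q.exists_linearEquiv_mem_mor_iff (f := f ∘ₗ c.inr)
    (hf.comp c.inr_injective) (g := g ∘ₗ c.inr) (hg.comp c.inr_injective) rfl rfl
  obtain ⟨β, hβ, hβmem⟩ := Q.exists_linearEquiv_mem_mor_iff hf hg
    (hfδ ▸ (c.range_comp_inr_sup_range_comp_inl f).symm)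
    (hgδ ▸ (c.range_comp_inr_sup_range_comp_inl g).symm)
  have hβδ (z : ↥(LinearMap.range (f ∘ₗ c.inr) ⊔ LinearMap.range (δ i))) (w : V)
      (hzw : (z : W i) = δ i w) : (β z : W j) = δ j w :=
    (hβ z (c.inl w) (hzw.trans (LinearMap.congr_fun hfδ w).symm)).trans
      (LinearMap.congr_fun hgδ w)
  have hβα (z : ↥(LinearMap.range (f ∘ₗ c.inr) ⊔ LinearMap.range (δ i)))
      (u : ↥(LinearMap.range (f ∘ₗ c.inr))) (hzu : (z : W i) = u) : (β z : W j) = α u := by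
    obtain ⟨_, u, rfl⟩ := u
    exact (hβ z (c.inr u) hzu).trans (hα _ u rfl).symm
  have hαδ (w : V) (hw : δ i w ∈ LinearMap.range (f ∘ₗ c.inr)) :
      (α ⟨δ i w, hw⟩ : W j) = δ j w :=
    (hβα ⟨δ i w, Submodule.mem_sup_left hw⟩ _ rfl).symm.trans (hβδ _ w rfl)
  exact hβmem.1 ((h i j _ _ α hαδ β hβα hβδ).1 (hαmem.2 hfg))

theorem extendsAlong_of_q_eq (hδ : ∀ i, Function.Injective (δ i))
    (h : ∀ (U : FDVec p) (c : Corr p V U) (i j : ι)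
      (f : c.po →ₗ[ZMod p] W i) (hf : Function.Injective f)
      (g : c.po →ₗ[ZMod p] W j) (hg : Function.Injective g),
      f ∘ₗ c.inl = δ i → g ∘ₗ c.inl = δ j →
      Q.q U i (f ∘ₗ c.inr) (hf.comp c.inr_injective)
        = Q.q U j (g ∘ₗ c.inr) (hg.comp c.inr_injective) →
      Q.q c.po i f hf = Q.q c.po j g hg) :
    Q.ExtendsAlong δ := by
  intro i j U U' α _ β hβα hβδ
  obtain ⟨c, f, hf, hfδ, hfU⟩ := Corr.exists_injective_comp_eq (U := subFD U) (hδ i)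
    U.injective_subtype
  have hrange : LinearMap.range f = U ⊔ LinearMap.range (δ i) := by
    rw [← c.range_comp_inr_sup_range_comp_inl f, hfδ, hfU, U.range_subtype]
  obtain ⟨e, he⟩ := exists_linearEquiv_coe_eq hf hrange
  let g : c.po →ₗ[ZMod p] W j :=
    (U' ⊔ LinearMap.range (δ j)).subtype ∘ₗ β.toLinearMap ∘ₗ e.toLinearMap
  have hg : Function.Injective g :=
    (Submodule.injective_subtype _).comp (β.injective.comp e.injective)
  have hgδ : g ∘ₗ c.inl = δ j := LinearMap.ext fun w =>
    hβδ _ w ((he _).trans (LinearMap.congr_fun hfδ w))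
  have hgα : g ∘ₗ c.inr = U'.subtype ∘ₗ α.toLinearMap := LinearMap.ext fun u =>
    hβα _ u ((he _).trans (LinearMap.congr_fun hfU u))
  rw [Q.mem_mor_iff_q_eq, Q.mem_mor_iff_of_linearEquiv β e hf hg he fun _ => rfl]
  simp only [← hfU, ← hgα]
  exact ⟨h _ c i j f hf g hg hfδ hgδ, fun hfg => q_comp_eq_q_comp hfg c.inr_injective⟩

end Conditions

section Central

variable {V U : FDVec p} {x : F.obj V} {δ : ∀ i, V →ₗ[ZMod p] W i}

/-- The element `q_i(f)` of the fibre `σ_{(V,x)}F(U)`, for an injection `f` of a pushout of `V` and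
`U` into `W_i` whose restriction to `V` represents `x`. -/
def fib (c : Corr p V U) {i : ι} {f : c.po →ₗ[ZMod p] W i} (hf : Function.Injective f)
    (hx : Q.q V i (f ∘ₗ c.inl) (hf.comp c.inl_injective) = x) : CentralFib F V x U :=
  ⟨c, Q.q c.po i f hf, (Q.natural _ _ _ _ _ _ _ _).symm.trans hx⟩

theorem exists_eq_fib (s : CentralFib F V x U) :
    ∃ (c : Corr p V U) (i : ι) (f : c.po →ₗ[ZMod p] W i) (hf : Function.Injective f)
      (hx : Q.q V i (f ∘ₗ c.inl) (hf.comp c.inl_injective) = x), s = Q.fib c hf hx := by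
  obtain ⟨c, b, hb⟩ := s
  obtain ⟨i, f, hf, rfl⟩ := Q.surjective _ b
  exact ⟨c, i, f, hf, (Q.natural _ _ _ _ _ _ _ _).trans hb, rfl⟩

theorem centralMap_fib {c : Corr p V U} {i : ι} {f : c.po →ₗ[ZMod p] W i}
    (hf : Function.Injective f) (hx : Q.q V i (f ∘ₗ c.inl) (hf.comp c.inl_injective) = x) :
    centralMap F V x U (Q.fib c hf hx) = Q.q U i (f ∘ₗ c.inr) (hf.comp c.inr_injective) :=
  (Q.natural _ _ _ _ _ _ _ _).symm

variable {Q} in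
theorem fib_eq_fib_iff {c : Corr p V U} {i j : ι}
    {f : c.po →ₗ[ZMod p] W i} {hf : Function.Injective f}
    {hfx : Q.q V i (f ∘ₗ c.inl) (hf.comp c.inl_injective) = x}
    {g : c.po →ₗ[ZMod p] W j} {hg : Function.Injective g}
    {hgx : Q.q V j (g ∘ₗ c.inl) (hg.comp c.inl_injective) = x} :
    Q.fib c hf hfx = Q.fib c hg hgx ↔ Q.q c.po i f hf = Q.q c.po j g hg :=
  ⟨fun h => congrArg Subtype.val (eq_of_heq (Sigma.mk.inj h).2),
    fun h => congrArg (Sigma.mk c) (Subtype.ext h)⟩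

variable {Q}

theorem fixesImages_of_isCentral (hc : F.IsCentral V x) (hδ : ∀ i, Function.Injective (δ i))
    (hx : ∀ i, Q.q V i (δ i) (hδ i) = x) : Q.FixesImages δ := by
  refine (Q.fixesImages_iff_forall_q_eq δ).2 fun U i j f hf g hg hfg u v huv => ?_
  obtain ⟨c, f', hf', hcδ, rfl⟩ := Corr.exists_injective_comp_eq (hδ i) hf
  obtain ⟨d, g', hg', hdδ, rfl⟩ := Corr.exists_injective_comp_eq (hδ j) hg
  have hfib : Q.fib c hf' (by simpa only [hcδ] using hx i)
      = Q.fib d hg' (by simpa only [hdδ] using hx j) :=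
    (hc U).1 <| by rw [centralMap_fib, centralMap_fib, hfg]
  obtain rfl : c = d := congrArg Sigma.fst hfib
  have hglue : c.inr u = c.inl v := hf' (huv.trans (LinearMap.congr_fun hcδ v).symm)
  rw [LinearMap.comp_apply, hglue, ← hdδ, LinearMap.comp_apply]

theorem extendsAlong_of_isCentral (hc : F.IsCentral V x) (hδ : ∀ i, Function.Injective (δ i))
    (hx : ∀ i, Q.q V i (δ i) (hδ i) = x) : Q.ExtendsAlong δ := by
  refine extendsAlong_of_q_eq hδ fun U c i j f hf g hg hfδ hgδ hfg => ?_
  have hfib : Q.fib c hf (by simpa only [hfδ] using hx i)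
      = Q.fib c hg (by simpa only [hgδ] using hx j) :=
    (hc U).1 <| by rw [centralMap_fib, centralMap_fib, hfg]
  exact fib_eq_fib_iff.1 hfib

theorem centralMap_surjective (hδ : ∀ i, Function.Injective (δ i))
    (hx : ∀ i, Q.q V i (δ i) (hδ i) = x) : Function.Surjective (centralMap F V x U) := by
  intro y
  obtain ⟨i, ε, hε, rfl⟩ := Q.surjective U y
  obtain ⟨c, f, hf, hfδ, rfl⟩ := Corr.exists_injective_comp_eq (hδ i) hε
  exact ⟨Q.fib c hf (by simpa only [hfδ] using hx i), Q.centralMap_fib hf _⟩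

theorem FixesImages.eq_of_q_eq (h : Q.FixesImages δ) {i : ι} (hδ : Function.Injective (δ i))
    {f : V →ₗ[ZMod p] W i} {hf : Function.Injective f}
    (hfδ : Q.q V i f hf = Q.q V i (δ i) hδ) : f = δ i :=
  LinearMap.ext fun v =>
    (Q.fixesImages_iff_forall_q_eq δ).1 h V i i (δ i) hδ f hf hfδ.symm v v rfl

theorem FixesImages.corr_eq (h : Q.FixesImages δ) {c d : Corr p V U} {i j : ι}
    {f : c.po →ₗ[ZMod p] W i} (hf : Function.Injective f)
    {g : d.po →ₗ[ZMod p] W j} (hg : Function.Injective g)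
    (hfδ : f ∘ₗ c.inl = δ i) (hgδ : g ∘ₗ d.inl = δ j)
    (hfg : Q.q U i (f ∘ₗ c.inr) (hf.comp c.inr_injective)
      = Q.q U j (g ∘ₗ d.inr) (hg.comp d.inr_injective)) : c = d := by
  rw [fixesImages_iff_forall_q_eq] at h
  refine Corr.eq_of_inr_eq_inl_iff fun v u => ?_
  rw [← hf.eq_iff, ← hg.eq_iff]
  change (f ∘ₗ c.inr) u = (f ∘ₗ c.inl) v ↔ (g ∘ₗ d.inr) u = (g ∘ₗ d.inl) v
  rw [hfδ, hgδ]
  exact ⟨h _ _ _ _ _ _ _ hfg u v, h _ _ _ _ _ _ _ hfg.symm u v⟩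

theorem centralMap_injective (h₁ : Q.FixesImages δ) (h₂ : Q.ExtendsAlong δ)
    (hδ : ∀ i, Function.Injective (δ i)) (hx : ∀ i, Q.q V i (δ i) (hδ i) = x) :
    Function.Injective (centralMap F V x U) := by
  intro s t hst
  obtain ⟨c, i, f, hf, hfx, rfl⟩ := Q.exists_eq_fib s
  obtain ⟨d, j, g, hg, hgx, rfl⟩ := Q.exists_eq_fib t
  rw [centralMap_fib, centralMap_fib] at hst
  have hfδ : f ∘ₗ c.inl = δ i := h₁.eq_of_q_eq (hδ i) (hfx.trans (hx i).symm)
  have hgδ : g ∘ₗ d.inl = δ j := h₁.eq_of_q_eq (hδ j) (hgx.trans (hx j).symm)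
  obtain rfl : c = d := h₁.corr_eq hf hg hfδ hgδ hst
  exact fib_eq_fib_iff.2 (h₂.q_eq hf hg hfδ hgδ hst)

end Central

end GenFamily

theorem statement_17_general {ι : Type} {W : ι → FDVec p} {F : VIPresheaf p} (Q : GenFamily W F)
    {V : FDVec p} {x : F.obj V} {δ : ∀ i, V →ₗ[ZMod p] W i}
    (hδ : ∀ i, Function.Injective (δ i)) (hxδ : ∀ i, x = F.map (δ i) (hδ i) (Q.phi i)) :
    F.IsCentral V x ↔ Q.FixesImages δ ∧ Q.ExtendsAlong δ := by
  have hx (i : ι) : Q.q V i (δ i) (hδ i) = x := (Q.q_eq_map_phi (hδ i)).trans (hxδ i).symm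
  constructor
  · intro hc
    exact ⟨GenFamily.fixesImages_of_isCentral hc hδ hx,
      GenFamily.extendsAlong_of_isCentral hc hδ hx⟩
  · rintro ⟨h₁, h₂⟩ U
    exact ⟨GenFamily.centralMap_injective h₁ h₂ hδ hx, GenFamily.centralMap_surjective hδ hx⟩

/-- **Statement 17.** Let `F` have a minimal generating family `((W_i), q)`, let
`x ∈ F(V)` and let `δ_i : V → W_i` be injective with `x = δ_i^* φ_i`; `V_i := δ_i(V)`.
Then `(V,x)` is central iff:
(1) every `α ∈ 𝒢_{(F,q)}(U ⊆ W_i, U' ⊆ W_j)` satisfies `α(v) = δ_j((δ_i|^{V_i})⁻¹ v)`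
for `v ∈ U ∩ V_i`; and
(2) for every isomorphism `α : U ≃ U'` satisfying that compatibility, `α ∈ 𝒢_{(F,q)}`
iff `ᾱ ∈ 𝒢_{(F,q)}(U + V_i, U' + V_j)`, where `ᾱ` is the linear isomorphism sending
`u ∈ U` to `α(u)` and `v = δ_i w ∈ V_i` to `δ_j w`. -/
theorem statement_17 {p : ℕ} [Fact p.Prime] {ι : Type} (W : ι → FDVec p)
    (F : VIPresheaf p) (Q : GenFamily W F) (hmin : Q.Minimal)
    (V : FDVec p) (x : F.obj V)
    (δ : ∀ i, V →ₗ[ZMod p] W i) (hδ : ∀ i, Function.Injective (δ i))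
    (hxδ : ∀ i, x = F.map (δ i) (hδ i) (Q.phi i)) :
    F.IsCentral V x ↔
      ((∀ (i j : ι) (U : Submodule (ZMod p) (W i)) (U' : Submodule (ZMod p) (W j))
          (α : ↥U ≃ₗ[ZMod p] ↥U'), α ∈ Q.mor i j U U' →
          ∀ (w : ↥V) (hw : δ i w ∈ U), ((α ⟨δ i w, hw⟩ : ↥U') : ↥(W j)) = δ j w) ∧
       (∀ (i j : ι) (U : Submodule (ZMod p) (W i)) (U' : Submodule (ZMod p) (W j))
          (α : ↥U ≃ₗ[ZMod p] ↥U'),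
          (∀ (w : ↥V) (hw : δ i w ∈ U), ((α ⟨δ i w, hw⟩ : ↥U') : ↥(W j)) = δ j w) →
          ∀ (β : ↥(U ⊔ LinearMap.range (δ i)) ≃ₗ[ZMod p] ↥(U' ⊔ LinearMap.range (δ j))),
            (∀ (z : ↥(U ⊔ LinearMap.range (δ i))) (u : ↥U), (z : ↥(W i)) = u →
              ((β z : ↥(U' ⊔ LinearMap.range (δ j))) : ↥(W j)) = ((α u : ↥U') : ↥(W j))) →
            (∀ (z : ↥(U ⊔ LinearMap.range (δ i))) (w : ↥V), (z : ↥(W i)) = δ i w →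
              ((β z : ↥(U' ⊔ LinearMap.range (δ j))) : ↥(W j)) = δ j w) →
            (α ∈ Q.mor i j U U' ↔
              β ∈ Q.mor i j (U ⊔ LinearMap.range (δ i)) (U' ⊔ LinearMap.range (δ j))))) := by
  exact statement_17_general Q hδ hxδ

end Paper
end

section
/- Let W be a finite-dimensional 𝔽_p-vector space and G a subgroup of GL(W), and let F := Hom_{𝒱I}(−,W)/G with canonical surjection q. Let C := {w ∈ W : g(w) = w for all g ∈ G}, a subspace of W, and ι_C : C → W its inclusion. Then for an injective linear map δ : V → W, the pair (V, q(δ)) is central for F if and only if δ factors through ι_C; consequently the centre of F is (C, q(ι_C)), i.e. (C, q(ι_C)) is central and every central element of F is of the form (V, α^* q(ι_C)) for an injective linear map α : V → C. -/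
set_option maxHeartbeats 1000000

namespace Paper

variable {p : ℕ} [Fact p.Prime]

section GroupQuotient

variable {p : ℕ} [Fact p.Prime] (W : FDVec p) (G : Subgroup (↥W ≃ₗ[ZMod p] ↥W))

/-- The relation on `Hom_{𝒱I}(V, W)` given by postcomposition by elements of `G ≤ GL(W)`. -/
def grel (V : FDVec p) (f g : {f : V →ₗ[ZMod p] W // Function.Injective f}) : Prop :=
  ∃ γ ∈ G, (γ : ↥W ≃ₗ[ZMod p] ↥W).toLinearMap ∘ₗ f.1 = g.1

theorem grel_equiv (V : FDVec p) : Equivalence (grel W G V) := by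
  constructor
  · intro f
    exact ⟨1, one_mem G, LinearMap.ext fun v => rfl⟩
  · rintro f g ⟨γ, hγ, hfg⟩
    refine ⟨γ⁻¹, inv_mem hγ, LinearMap.ext fun v => ?_⟩
    have h0 : (γ : ↥W ≃ₗ[ZMod p] ↥W) (f.1 v) = g.1 v :=
      congrArg (fun (k : _ →ₗ[ZMod p] ↥W) => k v) hfg
    show (γ⁻¹ : ↥W ≃ₗ[ZMod p] ↥W) (g.1 v) = f.1 v
    rw [← h0]
    exact (γ : ↥W ≃ₗ[ZMod p] ↥W).symm_apply_apply (f.1 v)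
  · rintro f g h ⟨γ, hγ, hfg⟩ ⟨γ', hγ', hgh⟩
    refine ⟨γ' * γ, mul_mem hγ' hγ, LinearMap.ext fun v => ?_⟩
    have h1 := congrArg (fun (k : _ →ₗ[ZMod p] ↥W) => (γ' : ↥W ≃ₗ[ZMod p] ↥W) (k v)) hfg
    have h2 := congrArg (fun (k : _ →ₗ[ZMod p] ↥W) => k v) hgh
    simp only [LinearMap.comp_apply] at h1 h2 ⊢
    exact h1.trans h2

/-- The setoid on `Hom_{𝒱I}(V, W)` determined by `G`. -/
def gSetoid (V : FDVec p) : Setoid {f : V →ₗ[ZMod p] W // Function.Injective f} :=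
  ⟨grel W G V, grel_equiv W G V⟩

/-- The presheaf `V ↦ Hom_{𝒱I}(V, W)/G`, where `G` acts by postcomposition. -/
def homModG : VIPresheaf p where
  obj V := Quotient (gSetoid W G V)
  map {T V} β hβ x :=
    Quotient.liftOn x
      (fun f => (Quotient.mk (gSetoid W G T) ⟨f.1 ∘ₗ β, comp_injective β f.1 hβ f.2⟩))
      (by
        rintro f g ⟨γ, hγ, hfg⟩
        refine Quotient.sound ⟨γ, hγ, ?_⟩
        show (γ : ↥W ≃ₗ[ZMod p] ↥W).toLinearMap ∘ₗ (f.1 ∘ₗ β) = g.1 ∘ₗ β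
        rw [← LinearMap.comp_assoc, hfg])
  map_id := by
    intro V h x
    refine Quotient.inductionOn x (fun f => ?_)
    exact congrArg (Quotient.mk (gSetoid W G V)) (Subtype.ext (LinearMap.comp_id f.1))
  map_comp := by
    intro V V' X f hf g hg hgf x
    refine Quotient.inductionOn x (fun k => ?_)
    exact congrArg (Quotient.mk (gSetoid W G V)) (Subtype.ext (LinearMap.comp_assoc f g k.1).symm)

/-- The canonical surjection `q : Hom_{𝒱I}(−, W) → Hom_{𝒱I}(−, W)/G`, as a generating
family indexed by a single space. -/
def qModG : GenFamily (fun _ : PUnit => W) (homModG W G) where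
  q V _ f hf := Quotient.mk (gSetoid W G V) ⟨f, hf⟩
  natural := by
    intro T V β hβ i f hf hfβ
    rfl
  surjective := by
    intro V x
    refine Quotient.inductionOn x (fun f => ?_)
    exact ⟨PUnit.unit, f.1, f.2, rfl⟩

end GroupQuotient

/-- The subspace `C = {w ∈ W : g(w) = w for all g ∈ G}` of fixed points. -/
def fixedC {p : ℕ} [Fact p.Prime] (W : FDVec p) (G : Subgroup (↥W ≃ₗ[ZMod p] ↥W)) :
    Submodule (ZMod p) W where
  carrier := {w | ∀ γ ∈ G, (γ : ↥W ≃ₗ[ZMod p] ↥W) w = w}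
  add_mem' := by
    intro a b ha hb γ hγ
    rw [map_add, ha γ hγ, hb γ hγ]
  zero_mem' := by
    intro γ hγ
    exact map_zero _
  smul_mem' := by
    intro c a ha γ hγ
    rw [map_smul, ha γ hγ]

/-! Since an injection `f` out of a pushout of `V` and `U` recovers the glue subspace as the kernel
of `(f ∘ ι_V) + (f ∘ ι_U)`, the fibre `σ_{(V,x)}F(U)` is the set of `G`-orbits of pairs
`(δ, ε)` of injections `V → W ← U` with `q(δ) = x`, and `ρ` sends the orbit of `(δ, ε)` to
`q(ε)`. So `ρ` is always surjective. At `U = W` the injection `ε = id` has trivial stabiliser,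
so the fibre of `ρ` over `q(id)` is the whole orbit `x`; hence `x` is central exactly when it is
a one-point orbit `{δ}`, that is, when `G` fixes the image of `δ` pointwise. -/

section Pushout

variable {V U W : FDVec p} {X : Type*} [AddCommGroup X] [Module (ZMod p) X]

attribute [ext] Corr

theorem Corr.hom_ext (c : Corr p V U) {f g : c.po →ₗ[ZMod p] X}
    (hl : f ∘ₗ c.inl = g ∘ₗ c.inl) (hr : f ∘ₗ c.inr = g ∘ₗ c.inr) : f = g :=
  Submodule.linearMap_qext _ (LinearMap.prod_ext hl hr)

theorem Corr.ker_coprod_comp (c : Corr p V U) {f : c.po →ₗ[ZMod p] X}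
    (hf : Function.Injective f) :
    LinearMap.ker ((f ∘ₗ c.inl).coprod (f ∘ₗ c.inr)) = c.carrier := by
  have hcoprod : (f ∘ₗ c.inl).coprod (f ∘ₗ c.inr) = f ∘ₗ c.carrier.mkQ :=
    LinearMap.prod_ext (LinearMap.coprod_inl _ _) (LinearMap.coprod_inr _ _)
  rw [hcoprod, LinearMap.ker_comp_of_ker_eq_bot _ (LinearMap.ker_eq_bot.mpr hf),
    Submodule.ker_mkQ]

variable (δ : V →ₗ[ZMod p] W) (ε : U →ₗ[ZMod p] W)
  (hδ : Function.Injective δ) (hε : Function.Injective ε)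

/-- The injection `V ⊕_{ν,ω} U → W` with restrictions `δ` and `ε`: the isomorphism `ε ↑ δ`
followed by the inclusion of `δ(V) + ε(U)`. -/
noncomputable def kerDesc : (kerCorr δ ε hδ hε).po →ₗ[ZMod p] W :=
  (LinearMap.range δ ⊔ LinearMap.range ε).subtype ∘ₗ (upArrow δ ε).toLinearMap

theorem kerDesc_injective : Function.Injective (kerDesc δ ε hδ hε) :=
  Subtype.val_injective.comp (upArrow δ ε).injective

theorem kerDesc_comp_inl : kerDesc δ ε hδ hε ∘ₗ (kerCorr δ ε hδ hε).inl = δ :=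
  LinearMap.coprod_inl δ ε

theorem kerDesc_comp_inr : kerDesc δ ε hδ hε ∘ₗ (kerCorr δ ε hδ hε).inr = ε :=
  LinearMap.coprod_inr δ ε

end Pushout

/-- The set `Hom_{𝒱I}(V, W)`. -/
abbrev VIHom (V W : FDVec p) : Type := {f : V →ₗ[ZMod p] W // Function.Injective f}

section Centre

variable {V U W : FDVec p} (G : Subgroup (↥W ≃ₗ[ZMod p] ↥W))

/-- The class `q(δ)` of an injection `δ : V → W` in `Hom_{𝒱I}(V, W)/G`. -/
abbrev homModG.mk (δ : VIHom V W) : (homModG W G).obj V := Quotient.mk (gSetoid W G V) δ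

variable {G} {x : (homModG W G).obj V}

theorem homModG.mk_eq_mk_iff {δ δ' : VIHom V W} :
    mk G δ = mk G δ' ↔ ∃ γ ∈ G, γ.toLinearMap ∘ₗ δ.1 = δ'.1 :=
  Quotient.eq (r := gSetoid W G V)

theorem centralFib_mk_eq_mk_iff {c d : Corr p V U} {f : VIHom c.po W} {g : VIHom d.po W}
    (hf : (homModG W G).map c.inl c.inl_injective (homModG.mk G f) = x)
    (hg : (homModG W G).map d.inl d.inl_injective (homModG.mk G g) = x) :
    (⟨c, homModG.mk G f, hf⟩ : CentralFib (homModG W G) V x U) = ⟨d, homModG.mk G g, hg⟩ ↔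
      ∃ γ ∈ G, γ.toLinearMap ∘ₗ (f.1 ∘ₗ c.inl) = g.1 ∘ₗ d.inl ∧
        γ.toLinearMap ∘ₗ (f.1 ∘ₗ c.inr) = g.1 ∘ₗ d.inr := by
  constructor
  · intro h
    obtain ⟨rfl, h⟩ := Sigma.mk.inj_iff.mp h
    obtain ⟨γ, hγ, hγf⟩ := homModG.mk_eq_mk_iff.mp (congrArg Subtype.val (eq_of_heq h))
    exact ⟨γ, hγ, congrArg (· ∘ₗ c.inl) hγf, congrArg (· ∘ₗ c.inr) hγf⟩
  · rintro ⟨γ, hγ, hl, hr⟩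
    have hγf : Function.Injective (γ.toLinearMap ∘ₗ f.1) := γ.injective.comp f.2
    obtain rfl : c = d := by
      ext1
      rw [← c.ker_coprod_comp hγf, ← d.ker_coprod_comp g.2, LinearMap.comp_assoc,
        LinearMap.comp_assoc, hl, hr]
    have hfg : homModG.mk G f = homModG.mk G g :=
      homModG.mk_eq_mk_iff.mpr ⟨γ, hγ, c.hom_ext hl hr⟩
    exact congrArg (Sigma.mk c) (Subtype.ext hfg)

/-- The point of `σ_{(V,x)}F(U)` given by injections `δ : V → W` in the orbit `x` and
`ε : U → W`. -/
noncomputable def pairFib (δ : VIHom V W) (hx : homModG.mk G δ = x) (ε : VIHom U W) :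
    CentralFib (homModG W G) V x U :=
  ⟨kerCorr δ.1 ε.1 δ.2 ε.2,
    homModG.mk G ⟨kerDesc δ.1 ε.1 δ.2 ε.2, kerDesc_injective δ.1 ε.1 δ.2 ε.2⟩,
    (congrArg (homModG.mk G) (Subtype.ext (kerDesc_comp_inl δ.1 ε.1 δ.2 ε.2))).trans hx⟩

theorem centralMap_pairFib (δ : VIHom V W) (hx : homModG.mk G δ = x) (ε : VIHom U W) :
    centralMap (homModG W G) V x U (pairFib δ hx ε) = homModG.mk G ε :=
  congrArg (homModG.mk G) (Subtype.ext (kerDesc_comp_inr δ.1 ε.1 δ.2 ε.2))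

theorem pairFib_eq_pairFib_iff {δ δ' : VIHom V W} (hx : homModG.mk G δ = x)
    (hx' : homModG.mk G δ' = x) {ε ε' : VIHom U W} :
    pairFib δ hx ε = pairFib δ' hx' ε' ↔
      ∃ γ ∈ G, γ.toLinearMap ∘ₗ δ.1 = δ'.1 ∧ γ.toLinearMap ∘ₗ ε.1 = ε'.1 := by
  refine (centralFib_mk_eq_mk_iff _ _).trans ?_
  rw [kerDesc_comp_inl δ.1 ε.1 δ.2 ε.2, kerDesc_comp_inl δ'.1 ε'.1 δ'.2 ε'.2,
    kerDesc_comp_inr δ.1 ε.1 δ.2 ε.2, kerDesc_comp_inr δ'.1 ε'.1 δ'.2 ε'.2]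

variable (x) in
theorem centralMap_homModG_surjective (U : FDVec p) :
    Function.Surjective (centralMap (homModG W G) V x U) := by
  intro y
  obtain ⟨δ, hx⟩ := Quotient.exists_rep x
  obtain ⟨ε, rfl⟩ := Quotient.exists_rep y
  exact ⟨pairFib δ hx ε, centralMap_pairFib δ hx ε⟩

theorem centralMap_homModG_injective (hx : {δ | homModG.mk G δ = x}.Subsingleton) (U : FDVec p) :
    Function.Injective (centralMap (homModG W G) V x U) := by
  rintro ⟨c, b, hb⟩ ⟨d, b', hb'⟩ h
  obtain ⟨f, rfl⟩ := Quotient.exists_rep b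
  obtain ⟨g, rfl⟩ := Quotient.exists_rep b'
  obtain ⟨γ, hγ, hr⟩ := homModG.mk_eq_mk_iff.mp h
  let δ : VIHom V W := ⟨f.1 ∘ₗ c.inl, f.2.comp c.inl_injective⟩
  let γδ : VIHom V W := ⟨γ.toLinearMap ∘ₗ δ.1, γ.injective.comp δ.2⟩
  have hγδ : homModG.mk G γδ = x := (homModG.mk_eq_mk_iff.mpr ⟨γ, hγ, rfl⟩).symm.trans hb
  have hl : γδ.1 = g.1 ∘ₗ d.inl := congrArg Subtype.val (hx hγδ hb')
  exact (centralFib_mk_eq_mk_iff hb hb').mpr ⟨γ, hγ, hl, hr⟩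

theorem homModG_isCentral_iff_subsingleton :
    (homModG W G).IsCentral V x ↔ {δ | homModG.mk G δ = x}.Subsingleton := by
  refine ⟨fun h δ hδ δ' hδ' => ?_, fun hx U =>
    ⟨centralMap_homModG_injective hx U, centralMap_homModG_surjective x U⟩⟩
  let idW : VIHom W W := ⟨LinearMap.id, linearMap_id_injective W⟩
  have hpair : pairFib δ hδ idW = pairFib δ' hδ' idW :=
    (h W).1 ((centralMap_pairFib δ hδ idW).trans (centralMap_pairFib δ' hδ' idW).symm)
  obtain ⟨γ, -, hγδ, hγ : γ.toLinearMap = LinearMap.id⟩ :=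
    (pairFib_eq_pairFib_iff hδ hδ').mp hpair
  rw [hγ] at hγδ
  exact Subtype.ext hγδ

theorem homModG.subsingleton_mk_eq_iff {δ : VIHom V W} :
    {δ' | mk G δ' = mk G δ}.Subsingleton ↔ LinearMap.range δ.1 ≤ fixedC W G := by
  constructor
  · rintro h _ ⟨v, rfl⟩ γ hγ
    let γδ : VIHom V W := ⟨γ.toLinearMap ∘ₗ δ.1, γ.injective.comp δ.2⟩
    have hγδ : mk G γδ = mk G δ := (mk_eq_mk_iff.mpr ⟨γ, hγ, rfl⟩).symm
    exact LinearMap.congr_fun (congrArg Subtype.val (h hγδ rfl)) v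
  · intro h
    refine Set.subsingleton_of_forall_eq δ fun δ' hδ' => ?_
    obtain ⟨γ, hγ, hγδ⟩ := mk_eq_mk_iff.mp hδ'.symm
    exact Subtype.ext (hγδ.symm.trans (LinearMap.ext fun v => h ⟨v, rfl⟩ γ hγ))

theorem homModG_isCentral_mk_iff_range_le {δ : VIHom V W} :
    (homModG W G).IsCentral V (homModG.mk G δ) ↔ LinearMap.range δ.1 ≤ fixedC W G :=
  homModG_isCentral_iff_subsingleton.trans homModG.subsingleton_mk_eq_iff

theorem homModG_isCentral_mk_iff_exists_factor {δ : VIHom V W} :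
    (homModG W G).IsCentral V (homModG.mk G δ) ↔
      ∃ δ₀ : V →ₗ[ZMod p] ↥(fixedC W G), (fixedC W G).subtype ∘ₗ δ₀ = δ.1 := by
  rw [homModG_isCentral_mk_iff_range_le]
  constructor
  · exact fun h => ⟨δ.1.codRestrict _ fun v => h ⟨v, rfl⟩, LinearMap.subtype_comp_codRestrict _ _ _⟩
  · rintro ⟨δ₀, hδ₀⟩
    rw [← hδ₀]
    exact (LinearMap.range_comp_le_range _ _).trans (fixedC W G).range_subtype.le

end Centre

/-- **Statement 19.** Let `F := Hom_{𝒱I}(−, W)/G` and `C := {w ∈ W : ∀ g ∈ G, g w = w}`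
with inclusion `ι_C`.  For an injective linear map `δ : V → W`, the pair `(V, q(δ))` is
central for `F` iff `δ` factors through `ι_C`; consequently `(C, q(ι_C))` is central, and
every central element of `F` has the form `(V, α^* q(ι_C))` for an injective `α : V → C`:
the centre of `F` is `(C, q(ι_C))`. -/
theorem statement_19 {p : ℕ} [Fact p.Prime] (W : FDVec p)
    (G : Subgroup (↥W ≃ₗ[ZMod p] ↥W)) :
    (∀ (V : FDVec p) (δ : V →ₗ[ZMod p] W) (hδ : Function.Injective δ),
        (homModG W G).IsCentral V (Quotient.mk (gSetoid W G V) ⟨δ, hδ⟩) ↔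
          ∃ δ₀ : V →ₗ[ZMod p] ↥(fixedC W G), (fixedC W G).subtype ∘ₗ δ₀ = δ) ∧
    (homModG W G).IsCentral (subFD (fixedC W G))
        (Quotient.mk (gSetoid W G (subFD (fixedC W G)))
          ⟨(fixedC W G).subtype, (fixedC W G).injective_subtype⟩) ∧
    (∀ (V : FDVec p) (x : (homModG W G).obj V), (homModG W G).IsCentral V x →
        ∃ (α : V →ₗ[ZMod p] ↥(fixedC W G)) (hα : Function.Injective α),
          x = (homModG W G).map (V := V) (W := subFD (fixedC W G)) α hα
            (Quotient.mk (gSetoid W G (subFD (fixedC W G)))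
              ⟨(fixedC W G).subtype, (fixedC W G).injective_subtype⟩)) := by
  refine ⟨fun _ _ _ => homModG_isCentral_mk_iff_exists_factor, ?_, fun V x hx => ?_⟩
  · exact (homModG_isCentral_mk_iff_range_le (V := subFD (fixedC W G))).mpr
      (fixedC W G).range_subtype.le
  · obtain ⟨⟨_, hδ⟩, rfl⟩ := Quotient.exists_rep x
    obtain ⟨α, rfl⟩ := homModG_isCentral_mk_iff_exists_factor.mp hx
    exact ⟨α, Function.Injective.of_comp (f := (fixedC W G).subtype) hδ, rfl⟩

end Paper
end
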